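/- arXiv:2212.12009 — 3 statements merged into one kernel-verified Lean document; each statement's English description precedes it below -/
import Mathlib

section
/- Let Θ be a partially ordered set in which every pair of elements has an upper bound and a lower bound in Θ, let Z be a nonempty set, and let f : Z × Θ → ℝ. Then f is linear combinations SC-preserving if and only if there exist z₁, z₂ ∈ Z and functions λ₁, λ₂ : Z → ℝ such that (1) f(z₁, ·) : Θ → ℝ and f(z₂, ·) : Θ → ℝ are each single crossing and ratio ordered, and (2) for every z ∈ Z and θ ∈ Θ, f(z, θ) = λ₁(z)·f(z₁, θ) + λ₂(z)·f(z₂, θ). -/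
/-!
The pair `v θ = (f₁ θ, f₂ θ)` is a curve in the plane; write `[x, y] = f₁ x * f₂ y - f₁ y * f₂ x`
for the determinant of `v x` and `v y`.  Ratio dominance says that `[l, h]` has a constant weak
sign along ordered pairs and that, on a chain `l < m < h`, `[l, h]` vanishes exactly when `[l, m]`
and `[m, h]` do.

Since pairs are bounded above and below, being single crossing is a condition on chains of three
elements (`singleCrossing_of_between`): the sign at the middle lies between the signs at the ends.

*Generated functions are single crossing* (`singleCrossing_comb`).  Let `g = α f₁ + β f₂` peak in
sign at `m` on `l < m < h`.  The identity `g l [m, h] - g m [l, h] + g h [l, m] = 0` has summands of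
one sign, so each is zero; with (RD+) all three brackets vanish.  Then `v l, v m, v h` are collinear, some `f_i`
is proportional to `g` on the chain, and this `f_i` is not single crossing.

*Preservation gives ratio order* (`ratioOrdered_of_comb`).  Test single crossing against the
combinations `[l, ·]`, `[·, h]` and `[l, ·] + [·, h]`.

*Preservation gives dimension at most two* (`exists_coeffs`).  If `[a, b] ≠ 0`, let `l` and `h` bound
`a`, `b` and `θ`.  A combination that vanishes at `l` and `h` vanishes in between; hence
`[l, h] ≠ 0`, and the combination of `f₁, f₂` that agrees with a third function at `l` and `h`
agrees with it at `a`, `b` and `θ`.  Its coefficients are determined by `a` and `b` alone.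
-/

/-- A function `f : Θ → ℝ` is single crossing if `θ ↦ sgn (f θ)` is monotone
(increasing or decreasing). -/
def SingleCrossing {Θ : Type*} [PartialOrder Θ] (f : Θ → ℝ) : Prop :=
  Monotone (fun θ => Real.sign (f θ)) ∨ Antitone (fun θ => Real.sign (f θ))

/-- Strictly single crossing: single crossing and no two ordered zeros. -/
def StrictSingleCrossing {Θ : Type*} [PartialOrder Θ] (f : Θ → ℝ) : Prop :=
  SingleCrossing f ∧ ∀ θ' θ'' : Θ, θ' < θ'' → ¬(f θ' = 0 ∧ f θ'' = 0)

/-- A subset of a partially ordered set is an interval. -/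
def IsIntervalSet {Θ : Type*} [PartialOrder Θ] (S : Set Θ) : Prop :=
  ∀ θl θm θh : Θ, θl ∈ S → θh ∈ S → θl < θm → θm < θh → θm ∈ S

/-- Single-crossing differences. -/
def SCD {A : Type*} {Θ : Type*} [PartialOrder Θ] (u : A → Θ → ℝ) : Prop :=
  ∀ a a' : A, SingleCrossing (fun θ => u a θ - u a' θ)

/-- Strict single-crossing differences. -/
def SSCD {A : Type*} {Θ : Type*} [PartialOrder Θ] (u : A → Θ → ℝ) : Prop :=
  ∀ a a' : A, a ≠ a' → StrictSingleCrossing (fun θ => u a θ - u a' θ)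

/-- The choice correspondence `C_u(S, θ)`. -/
def choiceCorr {A : Type*} {Θ : Type*} (u : A → Θ → ℝ) (S : Set A) (θ : Θ) : Set A :=
  {a ∈ S | ∀ b ∈ S, u b θ ≤ u a θ}

/-- `f₁` ratio dominates `f₂`: conditions (RD) and (RD+). -/
def RatioDominates {Θ : Type*} [PartialOrder Θ] (f₁ f₂ : Θ → ℝ) : Prop :=
  (∀ θl θh : Θ, θl < θh → f₁ θl * f₂ θh ≤ f₁ θh * f₂ θl) ∧
  (∀ θl θm θh : Θ, θl < θm → θm < θh →
    (f₁ θl * f₂ θh = f₁ θh * f₂ θl ↔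
      (f₁ θl * f₂ θm = f₁ θm * f₂ θl ∧ f₁ θm * f₂ θh = f₁ θh * f₂ θm)))

/-- `f₁` and `f₂` are ratio ordered. -/
def RatioOrdered {Θ : Type*} [PartialOrder Θ] (f₁ f₂ : Θ → ℝ) : Prop :=
  RatioDominates f₁ f₂ ∨ RatioDominates f₂ f₁

/-- `f₁` strictly ratio dominates `f₂`. -/
def StrictRatioDominates {Θ : Type*} [PartialOrder Θ] (f₁ f₂ : Θ → ℝ) : Prop :=
  ∀ θl θh : Θ, θl < θh → f₁ θl * f₂ θh < f₁ θh * f₂ θl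

/-- `f₁` and `f₂` are strictly ratio ordered. -/
def StrictRatioOrdered {Θ : Type*} [PartialOrder Θ] (f₁ f₂ : Θ → ℝ) : Prop :=
  StrictRatioDominates f₁ f₂ ∨ StrictRatioDominates f₂ f₁

/-- The environment `(A, Θ, u)` is convex. -/
def ConvexEnv {A : Type*} {Θ : Type*} (u : A → Θ → ℝ) : Prop :=
  ∀ a a' : A, ∀ lam : ℝ, 0 < lam → lam < 1 →
    ∃ a'' : A, ∀ θ : Θ, u a'' θ = lam * u a θ + (1 - lam) * u a' θ

/-- `A` is minimal with respect to `u`: no utility-indistinguishable pair. -/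
def MinimalActions {A : Type*} {Θ : Type*} (u : A → Θ → ℝ) : Prop :=
  ∀ a a' : A, a ≠ a' → ∃ θ : Θ, u a θ ≠ u a' θ

/-- `f : Z × Θ → ℝ` is linear combinations SC-preserving. -/
def LinCombSCPreserving {Z : Type*} {Θ : Type*} [PartialOrder Θ] (f : Z → Θ → ℝ) : Prop :=
  ∀ μ : Z → ℝ, (Function.support μ).Finite →
    SingleCrossing (fun θ => ∑ᶠ z, μ z * f z θ)

/-- `f : Z × Θ → ℝ` is linear combinations SSC-preserving. -/
def LinCombSSCPreserving {Z : Type*} {Θ : Type*} [PartialOrder Θ] (f : Z → Θ → ℝ) : Prop :=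
  ∀ μ : Z → ℝ, (Function.support μ).Finite →
    ((∀ θ : Θ, (∑ᶠ z, μ z * f z θ) = 0) ∨ StrictSingleCrossing (fun θ => ∑ᶠ z, μ z * f z θ))

/-- `f : Z × Θ → ℝ` is linear combinations monotonicity-preserving. -/
def LinCombMonPreserving {Z : Type*} {Θ : Type*} [PartialOrder Θ] (f : Z → Θ → ℝ) : Prop :=
  ∀ μ : Z → ℝ, (Function.support μ).Finite →
    (Monotone (fun θ => ∑ᶠ z, μ z * f z θ) ∨ Antitone (fun θ => ∑ᶠ z, μ z * f z θ))

/-- A finite-support lottery on `X`. -/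
def IsLottery {X : Type*} (P : X → ℝ) : Prop :=
  (∀ x, 0 ≤ P x) ∧ (Function.support P).Finite ∧ (∑ᶠ x, P x) = 1

/-- Single-crossing expectational differences. -/
def SCED {X : Type*} {Θ : Type*} [PartialOrder Θ] (v : X → Θ → ℝ) : Prop :=
  ∀ P Q : X → ℝ, IsLottery P → IsLottery Q →
    SingleCrossing (fun θ => (∑ᶠ x, P x * v x θ) - ∑ᶠ x, Q x * v x θ)

/-! ### Single crossing on chains -/

/-- A single-crossing function has, at the middle of a chain, a sign between those at the ends. -/
lemma SingleCrossing.between {Θ : Type*} [PartialOrder Θ] {g : Θ → ℝ} (hg : SingleCrossing g)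
    {l m h : Θ} (hlm : l ≤ m) (hmh : m ≤ h) :
    (Real.sign (g m) ≤ Real.sign (g l) ∨ Real.sign (g m) ≤ Real.sign (g h)) ∧
    (Real.sign (g l) ≤ Real.sign (g m) ∨ Real.sign (g h) ≤ Real.sign (g m)) := by
  rcases hg with hg | hg
  · exact ⟨Or.inr (hg hmh), Or.inl (hg hlm)⟩
  · exact ⟨Or.inl (hg hlm), Or.inr (hg hmh)⟩

lemma SingleCrossing.eq_zero {Θ : Type*} [PartialOrder Θ] {g : Θ → ℝ} (hg : SingleCrossing g)
    {l m h : Θ} (hlm : l ≤ m) (hmh : m ≤ h) (hl : g l = 0) (hh : g h = 0) : g m = 0 := by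
  have := hg.between hlm hmh
  rw [hl, hh, Real.sign_zero, or_self, or_self] at this
  exact Real.sign_eq_zero_iff.1 (le_antisymm this.1 this.2)

lemma SingleCrossing.pos_right {Θ : Type*} [PartialOrder Θ] {g : Θ → ℝ} (hg : SingleCrossing g)
    {l m h : Θ} (hlm : l ≤ m) (hmh : m ≤ h) (hl : g l = 0) (hm : 0 < g m) : 0 < g h := by
  have := (hg.between hlm hmh).1
  rw [hl, Real.sign_zero, Real.sign_of_pos hm] at this
  rcases lt_trichotomy (g h) 0 with h' | h' | h'
  · rw [Real.sign_of_neg h'] at this; norm_num at this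
  · rw [h', Real.sign_zero] at this; norm_num at this
  · exact h'

lemma SingleCrossing.pos_left {Θ : Type*} [PartialOrder Θ] {g : Θ → ℝ} (hg : SingleCrossing g)
    {l m h : Θ} (hlm : l ≤ m) (hmh : m ≤ h) (hh : g h = 0) (hm : 0 < g m) : 0 < g l := by
  have := (hg.between hlm hmh).1
  rw [hh, Real.sign_zero, Real.sign_of_pos hm] at this
  rcases lt_trichotomy (g l) 0 with h' | h' | h'
  · rw [Real.sign_of_neg h'] at this; norm_num at this
  · rw [h', Real.sign_zero] at this; norm_num at this
  · exact h'

/-- On a poset with bounds for pairs, single crossing is a condition on three-element chains. -/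
lemma singleCrossing_of_between {Θ : Type*} [PartialOrder Θ]
    (hub : ∀ θ₁ θ₂ : Θ, ∃ θ : Θ, θ₁ ≤ θ ∧ θ₂ ≤ θ)
    (hlb : ∀ θ₁ θ₂ : Θ, ∃ θ : Θ, θ ≤ θ₁ ∧ θ ≤ θ₂) {g : Θ → ℝ}
    (H : ∀ l m h : Θ, l < m → m < h →
      (Real.sign (g m) ≤ Real.sign (g l) ∨ Real.sign (g m) ≤ Real.sign (g h)) ∧
      (Real.sign (g l) ≤ Real.sign (g m) ∨ Real.sign (g h) ≤ Real.sign (g m))) :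
    SingleCrossing g := by
  have H' : ∀ l m h : Θ, l ≤ m → m ≤ h →
      (Real.sign (g m) ≤ Real.sign (g l) ∨ Real.sign (g m) ≤ Real.sign (g h)) ∧
      (Real.sign (g l) ≤ Real.sign (g m) ∨ Real.sign (g h) ≤ Real.sign (g m)) := by
    intro l m h hlm hmh
    rcases hlm.eq_or_lt with rfl | hlm
    · simp
    rcases hmh.eq_or_lt with rfl | hmh
    · simp
    exact H l m h hlm hmh
  by_contra hcon
  simp only [SingleCrossing, Monotone, Antitone, not_or, not_forall, not_le] at hcon
  obtain ⟨⟨a, b, hab, h1⟩, ⟨c, d, hcd, h2⟩⟩ := hcon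
  obtain ⟨l, hla, hlc⟩ := hlb a c
  obtain ⟨h, hbh, hdh⟩ := hub b d
  -- The descent from `a` to `b` forces `sgn g h < sgn g l`, the ascent from `c` to `d` the reverse.
  have e1 := (H' l a b hla hab).1
  have e2 := (H' a b h hab hbh).2
  have e3 := (H' l c d hlc hcd).2
  have e4 := (H' c d h hcd hdh).1
  grind

/-! ### Combinations of ratio-ordered functions -/

lemma sign_lt_sign_iff {x y : ℝ} :
    Real.sign x < Real.sign y ↔ (x ≤ 0 ∧ 0 < y) ∨ (x < 0 ∧ y = 0) := by
  rcases lt_trichotomy x 0 with hx | hx | hx <;> rcases lt_trichotomy y 0 with hy | hy | hy <;>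
    simp only [hx, hy, Real.sign_of_neg, Real.sign_of_pos, Real.sign_zero] <;>
    constructor <;> intro h <;> grind

/-- If `f₁` and `f₂` are single crossing and `f₁` ratio dominates `f₂`, the sign of
`α f₁ + β f₂` has no strict peak at the middle of a chain. -/
lemma no_peak {Θ : Type*} [PartialOrder Θ] {f₁ f₂ : Θ → ℝ}
    (h₁ : SingleCrossing f₁) (h₂ : SingleCrossing f₂) (hr : RatioDominates f₁ f₂) (α β : ℝ)
    {l m h : Θ} (hlm : l < m) (hmh : m < h) :
    Real.sign (α * f₁ m + β * f₂ m) ≤ Real.sign (α * f₁ l + β * f₂ l) ∨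
      Real.sign (α * f₁ m + β * f₂ m) ≤ Real.sign (α * f₁ h + β * f₂ h) := by
  by_contra hcon
  push Not at hcon
  obtain ⟨c1, c2⟩ := hcon
  obtain ⟨hrd, hrp⟩ := hr
  have rlm := hrd l m hlm
  have rmh := hrd m h hmh
  have rlh := hrd l h (hlm.trans hmh)
  have rp := hrp l m h hlm hmh
  generalize hgl : α * f₁ l + β * f₂ l = gl at *
  generalize hgm : α * f₁ m + β * f₂ m = gm at *
  generalize hgh : α * f₁ h + β * f₂ h = gh at *
  have key : gl * (f₁ m * f₂ h - f₁ h * f₂ m) - gm * (f₁ l * f₂ h - f₁ h * f₂ l)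
      + gh * (f₁ l * f₂ m - f₁ m * f₂ l) = 0 := by
    rw [← hgl, ← hgm, ← hgh]; ring
  have cases : (0 < gm ∧ gl ≤ 0 ∧ gh ≤ 0) ∨ (gm = 0 ∧ gl < 0 ∧ gh < 0) := by
    rcases sign_lt_sign_iff.1 c1 with ⟨d1, d2⟩ | ⟨d1, d2⟩ <;>
      rcases sign_lt_sign_iff.1 c2 with ⟨d3, d4⟩ | ⟨d3, d4⟩
    · exact Or.inl ⟨d2, d1, d3⟩
    · exact absurd d4 d2.ne'
    · exact absurd d2 d4.ne'
    · exact Or.inr ⟨d2, d1, d3⟩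
  have hall : f₁ l * f₂ h = f₁ h * f₂ l ∧ f₁ l * f₂ m = f₁ m * f₂ l ∧
      f₁ m * f₂ h = f₁ h * f₂ m := by
    rcases cases with ⟨pm, pl, ph⟩ | ⟨pm, pl, ph⟩
    · have t1 := mul_nonneg_of_nonpos_of_nonpos pl (sub_nonpos.2 rmh)
      have t2 := mul_nonneg_of_nonpos_of_nonpos ph (sub_nonpos.2 rlm)
      have t3 : f₁ l * f₂ h = f₁ h * f₂ l := by
        by_contra hne
        have := mul_pos pm (sub_pos.2 (lt_of_le_of_ne rlh hne))
        linarith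
      exact ⟨t3, rp.1 t3⟩
    · have t1 := mul_nonneg_of_nonpos_of_nonpos pl.le (sub_nonpos.2 rmh)
      have t2 := mul_nonneg_of_nonpos_of_nonpos ph.le (sub_nonpos.2 rlm)
      rw [pm, zero_mul, sub_zero] at key
      have t3 : f₁ m * f₂ h - f₁ h * f₂ m = 0 :=
        (mul_eq_zero.1 (by linarith : gl * (f₁ m * f₂ h - f₁ h * f₂ m) = 0)).resolve_left pl.ne
      have t4 : f₁ l * f₂ m - f₁ m * f₂ l = 0 :=
        (mul_eq_zero.1 (by linarith : gh * (f₁ l * f₂ m - f₁ m * f₂ l) = 0)).resolve_left ph.ne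
      have t5 := And.intro (sub_eq_zero.1 t4) (sub_eq_zero.1 t3)
      exact ⟨rp.2 t5, t5⟩
  obtain ⟨b1, b2, b3⟩ := hall
  -- A single-crossing function proportional to `g` on the chain vanishes on all of it, since
  -- otherwise its sign would peak or dip at `m` together with that of `g`.
  have fin : ∀ F : Θ → ℝ, SingleCrossing F → F l * gm = F m * gl → F h * gm = F m * gh →
      F l * gh = F h * gl → (0 < gm → F m = 0) ∧ (gm = 0 → gl < 0 → gh < 0 → F l = 0) := by
    intro F hF e1 e2 e3
    have B := hF.between hlm.le hmh.le
    constructor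
    · intro pm
      have ⟨pl, ph⟩ : gl ≤ 0 ∧ gh ≤ 0 := by
        rcases cases with c | c
        · exact c.2
        · exact absurd c.1 pm.ne'
      rcases lt_trichotomy (F m) 0 with k | k | k
      · exfalso
        have u1 : 0 ≤ F l := by
          by_contra w; push Not at w; nlinarith [mul_neg_of_neg_of_pos w pm]
        have u2 : 0 ≤ F h := by
          by_contra w; push Not at w; nlinarith [mul_neg_of_neg_of_pos w pm]
        have lt : ∀ x : ℝ, 0 ≤ x → Real.sign (F m) < Real.sign x := fun x hx =>
          sign_lt_sign_iff.2 (hx.eq_or_lt.elim (fun e => Or.inr ⟨k, e.symm⟩)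
            fun e => Or.inl ⟨k.le, e⟩)
        exact B.2.elim (lt _ u1).not_ge (lt _ u2).not_ge
      · exact k
      · exfalso
        have u1 : F l ≤ 0 := by
          by_contra w; push Not at w; nlinarith [mul_pos w pm]
        have u2 : F h ≤ 0 := by
          by_contra w; push Not at w; nlinarith [mul_pos w pm]
        have lt : ∀ x : ℝ, x ≤ 0 → Real.sign x < Real.sign (F m) := fun x hx =>
          sign_lt_sign_iff.2 (Or.inl ⟨hx, k⟩)
        exact B.1.elim (lt _ u1).not_ge (lt _ u2).not_ge
    · intro pm pl ph
      rw [pm, mul_zero] at e1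
      have km : F m = 0 := (mul_eq_zero.1 e1.symm).resolve_right pl.ne
      rw [km, Real.sign_zero] at B
      rcases lt_trichotomy (F l) 0 with k | k | k
      · exfalso
        have u : F h < 0 := by
          by_contra w; push Not at w; nlinarith [mul_pos_of_neg_of_neg k ph]
        rw [Real.sign_of_neg k, Real.sign_of_neg u] at B
        norm_num at B
      · exact k
      · exfalso
        have u : 0 < F h := by
          by_contra w; push Not at w; nlinarith [mul_neg_of_pos_of_neg k ph]
        rw [Real.sign_of_pos k, Real.sign_of_pos u] at B
        norm_num at B
  have F1 := fin f₁ h₁ (by rw [← hgl, ← hgm]; linear_combination β * b2)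
    (by rw [← hgh, ← hgm]; linear_combination -β * b3)
    (by rw [← hgh, ← hgl]; linear_combination β * b1)
  have F2 := fin f₂ h₂ (by rw [← hgl, ← hgm]; linear_combination -α * b2)
    (by rw [← hgh, ← hgm]; linear_combination α * b3)
    (by rw [← hgh, ← hgl]; linear_combination -α * b1)
  rcases cases with ⟨pm, pl, ph⟩ | ⟨pm, pl, ph⟩
  · rw [F1.1 pm, F2.1 pm] at hgm
    simp at hgm; linarith
  · rw [F1.2 pm pl ph, F2.2 pm pl ph] at hgl
    simp at hgl; linarith

lemma singleCrossing_comb {Θ : Type*} [PartialOrder Θ]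
    (hub : ∀ θ₁ θ₂ : Θ, ∃ θ : Θ, θ₁ ≤ θ ∧ θ₂ ≤ θ)
    (hlb : ∀ θ₁ θ₂ : Θ, ∃ θ : Θ, θ ≤ θ₁ ∧ θ ≤ θ₂) {f₁ f₂ : Θ → ℝ}
    (h₁ : SingleCrossing f₁) (h₂ : SingleCrossing f₂) (hr : RatioDominates f₁ f₂) (α β : ℝ) :
    SingleCrossing (fun θ => α * f₁ θ + β * f₂ θ) := by
  refine singleCrossing_of_between hub hlb fun l m h hlm hmh =>
    ⟨no_peak h₁ h₂ hr α β hlm hmh, ?_⟩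
  -- A trough of `g` is a peak of `-g`.
  have := no_peak h₁ h₂ hr (-α) (-β) hlm hmh
  have e : ∀ θ, -α * f₁ θ + -β * f₂ θ = -(α * f₁ θ + β * f₂ θ) := fun θ => by ring
  simpa only [e, Real.sign_neg, neg_le_neg_iff] using this

/-! ### Consequences of preservation -/

lemma ratioOrdered_of_comb {Θ : Type*} [PartialOrder Θ]
    (hub : ∀ θ₁ θ₂ : Θ, ∃ θ : Θ, θ₁ ≤ θ ∧ θ₂ ≤ θ)
    (hlb : ∀ θ₁ θ₂ : Θ, ∃ θ : Θ, θ ≤ θ₁ ∧ θ ≤ θ₂) {f₁ f₂ : Θ → ℝ}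
    (H : ∀ α β : ℝ, SingleCrossing (fun θ => α * f₁ θ + β * f₂ θ)) :
    RatioOrdered f₁ f₂ := by
  have RDp : ∀ θl θm θh : Θ, θl < θm → θm < θh →
    (f₁ θl * f₂ θh = f₁ θh * f₂ θl ↔
      (f₁ θl * f₂ θm = f₁ θm * f₂ θl ∧ f₁ θm * f₂ θh = f₁ θh * f₂ θm)) := by
    intro l m h hlm hmh
    constructor
    · intro e
      have g1 := (H (-f₂ l) (f₁ l)).eq_zero hlm.le hmh.le (by ring) (by linear_combination e)
      have g2 := (H (f₂ h) (-f₁ h)).eq_zero hlm.le hmh.le (by linear_combination e) (by ring)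
      exact ⟨by linear_combination g1, by linear_combination g2⟩
    · rintro ⟨e1, e2⟩
      -- `[·, h] + [l, ·]` takes the value `[l, h]` at both ends and vanishes at `m`.
      have B := (H (f₂ h - f₂ l) (f₁ l - f₁ h)).between hlm.le hmh.le
      have kl : (f₂ h - f₂ l) * f₁ l + (f₁ l - f₁ h) * f₂ l = f₁ l * f₂ h - f₁ h * f₂ l := by ring
      have kh : (f₂ h - f₂ l) * f₁ h + (f₁ l - f₁ h) * f₂ h = f₁ l * f₂ h - f₁ h * f₂ l := by ring
      have km : (f₂ h - f₂ l) * f₁ m + (f₁ l - f₁ h) * f₂ m = 0 := by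
        linear_combination e1 + e2
      simp only [kl, kh, km, Real.sign_zero, or_self] at B
      exact sub_eq_zero.1 (Real.sign_eq_zero_iff.1 (le_antisymm B.2 B.1))
  -- A strict orientation of one ordered pair propagates to every larger interval.
  have pos : ∀ l a b h : Θ, l ≤ a → a ≤ b → b ≤ h → f₁ b * f₂ a < f₁ a * f₂ b →
      f₁ h * f₂ l < f₁ l * f₂ h := by
    intro l a b h hla hab hbh e
    have g1 := (H (-f₂ a) (f₁ a)).pos_right hab hbh (by ring) (by linarith)
    have g2 := (H (f₂ h) (-f₁ h)).pos_left hla (hab.trans hbh) (by ring) (by linarith)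
    linarith
  have neg : ∀ l a b h : Θ, l ≤ a → a ≤ b → b ≤ h → f₁ a * f₂ b < f₁ b * f₂ a →
      f₁ l * f₂ h < f₁ h * f₂ l := by
    intro l a b h hla hab hbh e
    have g1 := (H (f₂ a) (-f₁ a)).pos_right hab hbh (by ring) (by linarith)
    have g2 := (H (-f₂ h) (f₁ h)).pos_left hla (hab.trans hbh) (by ring) (by linarith)
    linarith
  by_cases hd : ∀ l h : Θ, l < h → f₁ l * f₂ h ≤ f₁ h * f₂ l
  · exact Or.inl ⟨hd, RDp⟩
  · push Not at hd
    obtain ⟨c, d, hcd, hlt⟩ := hd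
    refine Or.inr ⟨fun a b hab => ?_, fun l m h hlm hmh => ?_⟩
    · by_contra hcon
      push Not at hcon
      obtain ⟨l, hla, hlc⟩ := hlb a c
      obtain ⟨h, hbh, hdh⟩ := hub b d
      have p := pos l c d h hlc hcd.le hdh hlt
      have n := neg l a b h hla hab.le hbh (by linarith)
      linarith
    · have := RDp l m h hlm hmh
      constructor
      · intro e
        have := this.1 (by linarith)
        exact ⟨by linarith [this.1], by linarith [this.2]⟩
      · rintro ⟨e1, e2⟩
        have := this.2 ⟨by linarith, by linarith⟩
        linarith

/-- If all combinations of `f₁, f₂, f₃` are single crossing and `f₁, f₂` are linearly independent,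
as witnessed by `a` and `b`, then `f₃` is a combination of `f₁` and `f₂`. -/
lemma exists_coeffs {Θ : Type*} [PartialOrder Θ]
    (hub : ∀ θ₁ θ₂ : Θ, ∃ θ : Θ, θ₁ ≤ θ ∧ θ₂ ≤ θ)
    (hlb : ∀ θ₁ θ₂ : Θ, ∃ θ : Θ, θ ≤ θ₁ ∧ θ ≤ θ₂) {f₁ f₂ f₃ : Θ → ℝ}
    (H : ∀ α β γ : ℝ, SingleCrossing (fun θ => α * f₁ θ + β * f₂ θ + γ * f₃ θ))
    {a b : Θ} (hab : f₁ a * f₂ b ≠ f₁ b * f₂ a) :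
    ∃ p q : ℝ, ∀ θ, f₃ θ = p * f₁ θ + q * f₂ θ := by
  have hD : f₁ a * f₂ b - f₁ b * f₂ a ≠ 0 := sub_ne_zero.2 hab
  -- Cramer's rule at `a` and `b`.
  refine ⟨(f₃ a * f₂ b - f₃ b * f₂ a) / (f₁ a * f₂ b - f₁ b * f₂ a),
    (f₁ a * f₃ b - f₁ b * f₃ a) / (f₁ a * f₂ b - f₁ b * f₂ a), fun θ => ?_⟩
  obtain ⟨l₀, hl₀a, hl₀b⟩ := hlb a b
  obtain ⟨l, hll₀, hlθ⟩ := hlb l₀ θ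
  obtain ⟨h₀, hah₀, hbh₀⟩ := hub a b
  obtain ⟨h, hhh₀, hθh⟩ := hub h₀ θ
  have hla := hll₀.trans hl₀a
  have hlb' := hll₀.trans hl₀b
  have hah := hah₀.trans hhh₀
  have hbh := hbh₀.trans hhh₀
  have hE : f₁ l * f₂ h - f₁ h * f₂ l ≠ 0 := by
    intro e
    -- The functionals `[l, ·]` and `[·, h]` vanish at both ends, hence at `a` and `b`.
    have a1 := (H (-f₂ l) (f₁ l) 0).eq_zero hla hah (by ring) (by linear_combination e)
    have b1 := (H (-f₂ l) (f₁ l) 0).eq_zero hlb' hbh (by ring) (by linear_combination e)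
    have a2 := (H (f₂ h) (-f₁ h) 0).eq_zero hla hah (by linear_combination e) (by ring)
    have b2 := (H (f₂ h) (-f₁ h) 0).eq_zero hlb' hbh (by linear_combination e) (by ring)
    have l1 : f₁ l = 0 := (mul_eq_zero.1 (by linear_combination f₁ a * b1 - f₁ b * a1 :
      f₁ l * (f₁ a * f₂ b - f₁ b * f₂ a) = 0)).resolve_right hD
    have l2 : f₂ l = 0 := (mul_eq_zero.1 (by linear_combination f₂ a * b1 - f₂ b * a1 :
      f₂ l * (f₁ a * f₂ b - f₁ b * f₂ a) = 0)).resolve_right hD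
    have h1 : f₁ h = 0 := (mul_eq_zero.1 (by linear_combination -f₁ a * b2 + f₁ b * a2 :
      f₁ h * (f₁ a * f₂ b - f₁ b * f₂ a) = 0)).resolve_right hD
    have h2 : f₂ h = 0 := (mul_eq_zero.1 (by linear_combination -f₂ a * b2 + f₂ b * a2 :
      f₂ h * (f₁ a * f₂ b - f₁ b * f₂ a) = 0)).resolve_right hD
    have a3 := (H 1 0 0).eq_zero hla hah (by simp [l1]) (by simp [h1])
    have b3 := (H 1 0 0).eq_zero hlb' hbh (by simp [l1]) (by simp [h1])
    simp at a3 b3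
    apply hD
    rw [a3, b3]; ring
  -- The determinant of the three functions at `l`, `h`, `x` vanishes for every `x` in `[l, h]`.
  have det : ∀ x, l ≤ x → x ≤ h →
      (f₂ l * f₃ h - f₂ h * f₃ l) * f₁ x + (f₁ h * f₃ l - f₁ l * f₃ h) * f₂ x
        + (f₁ l * f₂ h - f₁ h * f₂ l) * f₃ x = 0 := fun x hlx hxh =>
    (H (f₂ l * f₃ h - f₂ h * f₃ l) (f₁ h * f₃ l - f₁ l * f₃ h)
      (f₁ l * f₂ h - f₁ h * f₂ l)).eq_zero hlx hxh (by ring) (by ring)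
  have da := det a hla hah
  have db := det b hlb' hbh
  have dθ := det θ hlθ hθh
  generalize f₂ l * f₃ h - f₂ h * f₃ l = P at *
  generalize f₁ h * f₃ l - f₁ l * f₃ h = Q at *
  generalize f₁ l * f₂ h - f₁ h * f₂ l = E at *
  rw [div_mul_eq_mul_div, div_mul_eq_mul_div, ← add_div, eq_div_iff hD]
  apply mul_left_cancel₀ hE
  linear_combination (f₁ a * f₂ b - f₁ b * f₂ a) * dθ
    - (f₂ b * f₁ θ - f₁ b * f₂ θ) * da - (f₁ a * f₂ θ - f₂ a * f₁ θ) * db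

lemma LinCombSCPreserving.comb {Θ Z : Type*} [PartialOrder Θ] {f : Z → Θ → ℝ}
    (H : LinCombSCPreserving f) (z₁ z₂ z₃ : Z) (α β γ : ℝ) :
    SingleCrossing (fun θ => α * f z₁ θ + β * f z₂ θ + γ * f z₃ θ) := by
  classical
  let c : Z →₀ ℝ := Finsupp.single z₁ α + Finsupp.single z₂ β + Finsupp.single z₃ γ
  have := H c c.hasFiniteSupport
  have e : ∀ θ, ∑ᶠ z, c z * f z θ = α * f z₁ θ + β * f z₂ θ + γ * f z₃ θ := by
    intro θ
    have h1 : ∑ᶠ z, c z * f z θ = c.sum fun z r => r * f z θ := by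
      apply finsum_eq_sum_of_support_subset
      intro z hz
      simp only [Function.mem_support, Finset.mem_coe, Finsupp.mem_support_iff] at hz ⊢
      exact left_ne_zero_of_mul hz
    rw [h1, Finsupp.sum_add_index' (by simp) (by intros; ring),
      Finsupp.sum_add_index' (by simp) (by intros; ring)]
    simp
  simpa only [e] using this

/-- `f` is linear combinations SC-preserving iff it is linearly
generated by two single-crossing, ratio-ordered functions. -/
theorem linCombSCPreserving_iff {Θ Z : Type*} [PartialOrder Θ] [Nonempty Z]
    (hub : ∀ θ₁ θ₂ : Θ, ∃ θ : Θ, θ₁ ≤ θ ∧ θ₂ ≤ θ)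
    (hlb : ∀ θ₁ θ₂ : Θ, ∃ θ : Θ, θ ≤ θ₁ ∧ θ ≤ θ₂)
    (f : Z → Θ → ℝ) :
    LinCombSCPreserving f ↔
      ∃ (z₁ z₂ : Z) (lam₁ lam₂ : Z → ℝ),
        (SingleCrossing (f z₁) ∧ SingleCrossing (f z₂) ∧ RatioOrdered (f z₁) (f z₂)) ∧
        (∀ (z : Z) (θ : Θ), f z θ = lam₁ z * f z₁ θ + lam₂ z * f z₂ θ) := by
  constructor
  · intro H
    have H1 : ∀ z, SingleCrossing (f z) := fun z => by simpa using H.comb z z z 1 0 0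
    by_cases hind : ∃ z₁ z₂ a b, f z₁ a * f z₂ b ≠ f z₁ b * f z₂ a
    · obtain ⟨z₁, z₂, a, b, hab⟩ := hind
      choose p q hpq using fun z =>
        exists_coeffs hub hlb (f₃ := f z) (H.comb z₁ z₂ z) hab
      exact ⟨z₁, z₂, p, q, ⟨H1 z₁, H1 z₂, ratioOrdered_of_comb hub hlb fun α β => by
        simpa using H.comb z₁ z₂ z₂ α β 0⟩, hpq⟩
    · -- All functions are multiples of a single one, which is ratio ordered with itself.
      push Not at hind
      have self : ∀ z, RatioOrdered (f z) (f z) := fun z =>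
        Or.inl ⟨fun l h _ => (mul_comm _ _).le, fun l m h _ _ =>
          ⟨fun _ => ⟨mul_comm _ _, mul_comm _ _⟩, fun _ => mul_comm _ _⟩⟩
      by_cases hz : ∃ z a, f z a ≠ 0
      · obtain ⟨z₁, a, ha⟩ := hz
        refine ⟨z₁, z₁, fun z => f z a / f z₁ a, fun _ => 0, ⟨H1 _, H1 _, self _⟩, fun z θ => ?_⟩
        have := hind z₁ z a θ
        field_simp
        linarith
      · push Not at hz
        obtain ⟨z₁⟩ := ‹Nonempty Z›
        exact ⟨z₁, z₁, 0, 0, ⟨H1 _, H1 _, self _⟩, fun z θ => by simp [hz]⟩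
  · rintro ⟨z₁, z₂, p, q, ⟨h₁, h₂, hr⟩, hf⟩ μ hμ
    have hsum : ∀ F : Z → ℝ, ∑ᶠ z, μ z * F z = ∑ z ∈ hμ.toFinset, μ z * F z := by
      intro F
      apply finsum_eq_sum_of_support_subset
      intro z hz
      simp only [Function.mem_support, Set.Finite.coe_toFinset] at hz ⊢
      exact left_ne_zero_of_mul hz
    have e : ∀ θ, ∑ᶠ z, μ z * f z θ = (∑ z ∈ hμ.toFinset, μ z * p z) * f z₁ θ
        + (∑ z ∈ hμ.toFinset, μ z * q z) * f z₂ θ := by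
      intro θ
      rw [hsum, Finset.sum_mul, Finset.sum_mul, ← Finset.sum_add_distrib]
      refine Finset.sum_congr rfl fun z _ => ?_
      rw [hf z θ]; ring
    simp only [e]
    rcases hr with hr | hr
    · exact singleCrossing_comb hub hlb h₁ h₂ hr _ _
    · have := singleCrossing_comb hub hlb h₂ h₁ hr (∑ z ∈ hμ.toFinset, μ z * q z)
        (∑ z ∈ hμ.toFinset, μ z * p z)
      simpa only [add_comm] using this
end

section
/- Let Θ be a partially ordered set in which every pair of elements has an upper bound and a lower bound in Θ, and suppose there exists a strictly increasing function from Θ to ℝ (i.e., a function h₀ : Θ → ℝ with θ < θ' implying h₀(θ) < h₀(θ')). Let A be a set, let u : A × Θ → ℝ be such that the environment (A, Θ, u) is convex, and suppose A is minimal with respect to u (for all distinct a, a' ∈ A there is θ ∈ Θ with u(a,θ) ≠ u(a',θ)). Then u has strict single-crossing differences (SSCD) if and only if there exist functions g₁, g₂ : A → ℝ and f₁, f₂, h : Θ → ℝ such that f₁ and f₂ are strictly ratio ordered, and for all a ∈ A and θ ∈ Θ, u(a, θ) = g₁(a)·f₁(θ) + g₂(a)·f₂(θ) + h(θ). -/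
/-! ### Signs and strictly single-crossing functions -/

lemma sign_le_imp {x y : ℝ} (h : Real.sign x ≤ Real.sign y) :
    (0 < x → 0 < y) ∧ (0 ≤ x → 0 ≤ y) := by
  rcases lt_trichotomy x 0 with hx | hx | hx <;> rcases lt_trichotomy y 0 with hy | hy | hy <;>
    simp_all [Real.sign_of_pos, Real.sign_of_neg, le_of_lt, not_le_of_gt, not_lt_of_gt]

lemma sign_not_le {x y : ℝ} (h : ¬ Real.sign x ≤ Real.sign y) :
    0 ≤ x ∧ y ≤ 0 ∧ ¬ (x = 0 ∧ y = 0) := by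
  rcases lt_trichotomy x 0 with hx | hx | hx <;> rcases lt_trichotomy y 0 with hy | hy | hy <;>
    simp_all [Real.sign_of_pos, Real.sign_of_neg, le_of_lt, not_le_of_gt] <;>
    first | norm_num at h | (intro h'; linarith)

lemma sign_neg_le {x y : ℝ} (h : Real.sign x ≤ Real.sign y) :
    Real.sign (-y) ≤ Real.sign (-x) := by
  rw [Real.sign_neg, Real.sign_neg]; linarith

section
variable {Θ : Type*} [PartialOrder Θ]

lemma StrictSingleCrossing.neg {f : Θ → ℝ} (h : StrictSingleCrossing f) :
    StrictSingleCrossing (fun θ => -f θ) := by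
  refine ⟨h.1.symm.imp (fun k x y hxy => sign_neg_le (k hxy)) (fun k x y hxy =>
    sign_neg_le (k hxy)), fun x y hxy hz => h.2 x y hxy ⟨?_, ?_⟩⟩ <;> linarith [hz.1, hz.2]

lemma StrictSingleCrossing.const_mul {f : Θ → ℝ} (h : StrictSingleCrossing f) {c : ℝ}
    (hc : 0 < c) : StrictSingleCrossing (fun θ => c * f θ) := by
  have hs : ∀ θ, Real.sign (c * f θ) = Real.sign (f θ) := fun θ => by
    rcases lt_trichotomy (f θ) 0 with hx | hx | hx
    · rw [Real.sign_of_neg hx, Real.sign_of_neg (mul_neg_of_pos_of_neg hc hx)]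
    · simp [hx]
    · rw [Real.sign_of_pos hx, Real.sign_of_pos (mul_pos hc hx)]
  refine ⟨?_, fun x y hxy hz => h.2 x y hxy ⟨?_, ?_⟩⟩
  · simpa only [SingleCrossing, hs] using h.1
  · exact (mul_eq_zero.1 hz.1).resolve_left hc.ne'
  · exact (mul_eq_zero.1 hz.2).resolve_left hc.ne'

/-- Above a zero, a strictly single-crossing function has a constant nonzero sign. -/
lemma StrictSingleCrossing.pos_above {f : Θ → ℝ} (h : StrictSingleCrossing f) {x y z : Θ}
    (hxy : x < y) (hyz : y < z) (h0 : f x = 0) : 0 < f y * f z := by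
  have hy : f y ≠ 0 := fun e => h.2 _ _ hxy ⟨h0, e⟩
  have hz : f z ≠ 0 := fun e => h.2 _ _ (hxy.trans hyz) ⟨h0, e⟩
  rcases h.1 with k | k
  · have a := (sign_le_imp (k hxy.le)).2 h0.ge
    have b := (sign_le_imp (k (hxy.trans hyz).le)).2 h0.ge
    exact mul_pos (lt_of_le_of_ne a hy.symm) (lt_of_le_of_ne b hz.symm)
  · have a := (sign_le_imp (sign_neg_le (k hxy.le))).2 (by simp [h0])
    have b := (sign_le_imp (sign_neg_le (k (hxy.trans hyz).le))).2 (by simp [h0])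
    exact mul_pos_of_neg_of_neg (lt_of_le_of_ne (by linarith) hy)
      (lt_of_le_of_ne (by linarith) hz)

/-- Below a zero, a strictly single-crossing function has a constant nonzero sign. -/
lemma StrictSingleCrossing.pos_below {f : Θ → ℝ} (h : StrictSingleCrossing f) {x y z : Θ}
    (hxy : x < y) (hyz : y < z) (h0 : f z = 0) : 0 < f x * f y := by
  have hy : f y ≠ 0 := fun e => h.2 _ _ hyz ⟨e, h0⟩
  have hx : f x ≠ 0 := fun e => h.2 _ _ (hxy.trans hyz) ⟨e, h0⟩
  rcases h.1 with k | k
  · have a := (sign_le_imp (sign_neg_le (k hyz.le))).2 (by simp [h0])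
    have b := (sign_le_imp (sign_neg_le (k (hxy.trans hyz).le))).2 (by simp [h0])
    exact mul_pos_of_neg_of_neg (lt_of_le_of_ne (by linarith) hx)
      (lt_of_le_of_ne (by linarith) hy)
  · have a := (sign_le_imp (k hyz.le)).2 h0.ge
    have b := (sign_le_imp (k (hxy.trans hyz).le)).2 h0.ge
    exact mul_pos (lt_of_le_of_ne b hx.symm) (lt_of_le_of_ne a hy.symm)

/-! ### Sufficiency of the two-statistic form -/

/-- A combination of strictly ratio ordered functions vanishing at two ordered points is trivial. -/
lemma coeff_zero {f₁ f₂ : Θ → ℝ} (hd : StrictRatioDominates f₁ f₂) {α β : ℝ} {l h : Θ}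
    (hlh : l < h) (hl : α * f₁ l + β * f₂ l = 0) (hh : α * f₁ h + β * f₂ h = 0) :
    α = 0 ∧ β = 0 := by
  have hc : f₁ h * f₂ l - f₁ l * f₂ h ≠ 0 :=
    (sub_pos.2 (hd l h hlh)).ne'
  constructor
  · refine (mul_eq_zero.1 (?_ : α * (f₁ h * f₂ l - f₁ l * f₂ h) = 0)).resolve_right hc
    linear_combination f₂ l * hh - f₂ h * hl
  · refine (mul_eq_zero.1 (?_ : β * (f₁ h * f₂ l - f₁ l * f₂ h) = 0)).resolve_right hc
    linear_combination f₁ h * hl - f₁ l * hh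

/-- If the sign of a combination strictly falls from `l` to `h`, the combination is nonnegative
everywhere below `l` and nonpositive everywhere above `h`. -/
lemma ends_of_decrease {f₁ f₂ : Θ → ℝ} (hd : StrictRatioDominates f₁ f₂) {α β : ℝ}
    {b l h t : Θ} (hbl : b ≤ l) (hlh : l < h) (hht : h ≤ t)
    (hl : 0 ≤ α * f₁ l + β * f₂ l) (hh : α * f₁ h + β * f₂ h ≤ 0) :
    0 ≤ α * f₁ b + β * f₂ b ∧ α * f₁ t + β * f₂ t ≤ 0 := by
  constructor
  · rcases hbl.eq_or_lt with rfl | hbl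
    · exact hl
    have h1 := hd _ _ hbl
    have h2 := hd _ _ hlh
    have h3 := hd _ _ (hbl.trans hlh)
    by_contra! hb
    nlinarith [mul_pos_of_neg_of_neg hb (sub_neg.2 h2),
      mul_nonneg_of_nonpos_of_nonpos hh (sub_neg.2 h1).le,
      mul_nonneg hl (sub_pos.2 h3).le]
  · rcases hht.eq_or_lt with rfl | hht
    · exact hh
    have h1 := hd _ _ hlh
    have h2 := hd _ _ hht
    have h3 := hd _ _ (hlh.trans hht)
    by_contra! hb
    nlinarith [mul_pos hb (sub_pos.2 h1), mul_nonneg hl (sub_pos.2 h2).le,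
      mul_nonneg_of_nonpos_of_nonpos hh (sub_neg.2 h3).le]

lemma strictSC_of_dominates (hub : ∀ θ₁ θ₂ : Θ, ∃ θ : Θ, θ₁ ≤ θ ∧ θ₂ ≤ θ)
    (hlb : ∀ θ₁ θ₂ : Θ, ∃ θ : Θ, θ ≤ θ₁ ∧ θ ≤ θ₂) {f₁ f₂ : Θ → ℝ}
    (hd : StrictRatioDominates f₁ f₂) {α β : ℝ} (hne : ¬ (α = 0 ∧ β = 0)) :
    StrictSingleCrossing (fun θ => α * f₁ θ + β * f₂ θ) := by
  refine ⟨?_, fun x y hxy hz => hne (coeff_zero hd hxy hz.1 hz.2)⟩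
  by_contra hcon
  simp only [SingleCrossing, Monotone, Antitone, not_or, not_forall] at hcon
  obtain ⟨⟨l₁, h₁, le₁, s₁⟩, ⟨l₂, h₂, le₂, s₂⟩⟩ := hcon
  have lt₁ : l₁ < h₁ := lt_of_le_of_ne le₁ (by rintro rfl; exact s₁ le_rfl)
  have lt₂ : l₂ < h₂ := lt_of_le_of_ne le₂ (by rintro rfl; exact s₂ le_rfl)
  obtain ⟨b, hb₁, hb₂⟩ := hlb l₁ l₂
  obtain ⟨t, ht₁, ht₂⟩ := hub h₁ h₂
  obtain ⟨p₁, q₁, -⟩ := sign_not_le s₁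
  obtain ⟨p₂, q₂, -⟩ := sign_not_le s₂
  obtain ⟨A₁, B₁⟩ := ends_of_decrease hd hb₁ lt₁ ht₁ p₁ q₁
  obtain ⟨A₂, B₂⟩ := ends_of_decrease hd (α := -α) (β := -β) hb₂ lt₂ ht₂
    (by linarith) (by linarith)
  exact hne (coeff_zero hd (lt_of_le_of_lt hb₁ (lt₁.trans_le ht₁))
    (by linarith) (by linarith))

/-! ### Construction of strictly ratio ordered pairs -/

/-- If every nontrivial combination of a pair is strictly single crossing, the pair is strictly
ratio ordered. -/
lemma ratioOrdered_of_indep (hub : ∀ θ₁ θ₂ : Θ, ∃ θ : Θ, θ₁ ≤ θ ∧ θ₂ ≤ θ)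
    (hlb : ∀ θ₁ θ₂ : Θ, ∃ θ : Θ, θ ≤ θ₁ ∧ θ ≤ θ₂) {f₁ f₂ : Θ → ℝ}
    (H : ∀ α β : ℝ, ¬ (α = 0 ∧ β = 0) → StrictSingleCrossing (fun θ => α * f₁ θ + β * f₂ θ)) :
    (∀ l h : Θ, l < h → f₁ l * f₂ h - f₁ h * f₂ l ≠ 0) ∧ StrictRatioOrdered f₁ f₂ := by
  have hc : ∀ l h : Θ, l < h → f₁ l * f₂ h - f₁ h * f₂ l ≠ 0 := by
    intro l h hlh e
    by_cases h0 : f₂ l = 0 ∧ f₁ l = 0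
    · -- Both functions vanish at `l`: choose a combination that vanishes at `h` as well.
      by_cases h1 : f₂ h = 0 ∧ f₁ h = 0
      · exact (H 1 0 (by simp)).2 l h hlh (by simp [h0, h1])
      · refine (H (f₂ h) (-f₁ h) (by simpa using h1)).2 l h hlh ⟨by simp [h0], ?_⟩
        ring
    · refine (H (f₂ l) (-f₁ l) (by simpa using h0)).2 l h hlh ⟨?_, ?_⟩
      · ring
      · linear_combination -e
  refine ⟨hc, ?_⟩
  have up : ∀ x y z : Θ, x < y → y < z →
      0 < (f₁ x * f₂ y - f₁ y * f₂ x) * (f₁ x * f₂ z - f₁ z * f₂ x) := by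
    intro x y z hxy hyz
    have := (H (-f₂ x) (f₁ x) (by
      rintro ⟨e₂, e₁⟩
      exact hc x y hxy (by rw [e₁, neg_eq_zero.1 e₂]; ring))).pos_above hxy hyz (by ring)
    linarith
  have dn : ∀ x y z : Θ, x < y → y < z →
      0 < (f₁ x * f₂ z - f₁ z * f₂ x) * (f₁ y * f₂ z - f₁ z * f₂ y) := by
    intro x y z hxy hyz
    have := (H (f₂ z) (-f₁ z) (by
      rintro ⟨e₂, e₁⟩
      exact hc y z hyz (by rw [neg_eq_zero.1 e₁, e₂]; ring))).pos_below hxy hyz (by ring)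
    linarith
  have key : ∀ b l h t : Θ, b ≤ l → l < h → h ≤ t →
      0 < (f₁ l * f₂ h - f₁ h * f₂ l) * (f₁ b * f₂ t - f₁ t * f₂ b) := by
    intro b l h t hbl hlh hht
    have s₁ : 0 < (f₁ b * f₂ h - f₁ h * f₂ b) * (f₁ l * f₂ h - f₁ h * f₂ l) := by
      rcases hbl.eq_or_lt with rfl | hbl
      · exact mul_self_pos.2 (hc _ _ hlh)
      · exact dn _ _ _ hbl hlh
    have s₂ : 0 < (f₁ b * f₂ h - f₁ h * f₂ b) * (f₁ b * f₂ t - f₁ t * f₂ b) := by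
      rcases hht.eq_or_lt with rfl | hht
      · exact mul_self_pos.2 (hc _ _ (hbl.trans_lt hlh))
      · exact up _ _ _ (hbl.trans_lt hlh) hht
    rcases pos_and_pos_or_neg_and_neg_of_mul_pos s₁ with ⟨p, q⟩ | ⟨p, q⟩
    · exact mul_pos q (pos_of_mul_pos_right s₂ p.le)
    · rcases pos_and_pos_or_neg_and_neg_of_mul_pos s₂ with ⟨p', r⟩ | ⟨p', r⟩
      · linarith
      · exact mul_pos_of_neg_of_neg q r
  by_contra hcon
  simp only [StrictRatioOrdered, StrictRatioDominates, not_or, not_forall, not_lt] at hcon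
  obtain ⟨⟨l₁, h₁, lt₁, s₁⟩, ⟨l₂, h₂, lt₂, s₂⟩⟩ := hcon
  obtain ⟨b, hb₁, hb₂⟩ := hlb l₁ l₂
  obtain ⟨t, ht₁, ht₂⟩ := hub h₁ h₂
  have k₁ := key b l₁ h₁ t hb₁ lt₁ ht₁
  have k₂ := key b l₂ h₂ t hb₂ lt₂ ht₂
  have c₁ := pos_of_mul_pos_right k₁ (by linarith)
  nlinarith [mul_nonneg (by linarith : 0 ≤ -(f₁ l₂ * f₂ h₂ - f₁ h₂ * f₂ l₂)) c₁.le]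

/-- A strictly single-crossing function with increasing sign strictly ratio dominates some other
function. -/
lemma exists_dominates {f h₀ : Θ → ℝ} (hh : StrictMono h₀)
    (hm : Monotone (fun θ => Real.sign (f θ)))
    (hz : ∀ θ' θ'' : Θ, θ' < θ'' → ¬(f θ' = 0 ∧ f θ'' = 0)) :
    ∃ f₂ : Θ → ℝ, StrictRatioDominates f₂ f := by
  classical
  -- The ratio `f₂ / f` is increasing in `θ` on each of `{f < 0}` and `{0 < f}`. As `arctan` has
  -- oscillation at most `π < 4`, the shift by `4` makes it smaller on `{0 < f}` than on `{f < 0}`.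
  refine ⟨fun θ => if f θ = 0 then -1 else if 0 < f θ then f θ * Real.arctan (h₀ θ)
    else f θ * (Real.arctan (h₀ θ) + 4), ?_⟩
  intro l h hlh
  have ha : Real.arctan (h₀ l) < Real.arctan (h₀ h) := Real.arctan_strictMono (hh hlh)
  have ha1 := Real.neg_pi_div_two_lt_arctan (h₀ l)
  have ha2 := Real.arctan_lt_pi_div_two (h₀ h)
  have hpi := Real.pi_lt_four
  obtain ⟨m1, m2⟩ := sign_le_imp (hm hlh.le)
  have hzz := hz l h hlh
  rcases lt_trichotomy (f l) 0 with hl | hl | hl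
  · rcases lt_trichotomy (f h) 0 with hr | hr | hr
    · simp only [hl.ne, hr.ne, hl.not_gt, hr.not_gt, if_false]
      nlinarith [mul_pos (mul_pos_of_neg_of_neg hl hr) (sub_pos.2 ha)]
    · simp only [hl.ne, hl.not_gt, hr, if_true, if_false]
      linarith
    · simp only [hl.ne, hl.not_gt, hr.ne', hr, if_true, if_false]
      nlinarith [mul_pos (mul_pos (neg_pos.2 hl) hr)
        (by linarith : 0 < Real.arctan (h₀ l) + 4 - Real.arctan (h₀ h))]
  · have hr : 0 < f h := lt_of_le_of_ne (m2 hl.ge) fun e => hzz ⟨hl, e.symm⟩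
    simp only [hl, if_true]
    linarith
  · have hr := m1 hl
    simp only [hl.ne', hr.ne', hl, hr, if_true, if_false]
    nlinarith [mul_pos (mul_pos hl hr) (sub_pos.2 ha)]

end

/-! ### The span of utility differences -/

/-- In a convex environment each element of the span of the utility differences is a positive
multiple of a single utility difference. -/
lemma mem_span_diff {Θ A : Type*} {u : A → Θ → ℝ} (hconv : ConvexEnv u) (a₀ : A) {f : Θ → ℝ}
    (hf : f ∈ Submodule.span ℝ {g : Θ → ℝ | ∃ a a' : A, g = u a - u a'}) :
    ∃ (c : ℝ) (a a' : A), 0 < c ∧ f = fun θ => c * (u a θ - u a' θ) := by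
  induction hf using Submodule.span_induction with
  | mem x hx =>
    obtain ⟨a, a', rfl⟩ := hx
    exact ⟨1, a, a', one_pos, by ext; simp⟩
  | zero => exact ⟨1, a₀, a₀, one_pos, by ext; simp⟩
  | add x y _ _ hx hy =>
    obtain ⟨c, a, a', hc, rfl⟩ := hx
    obtain ⟨d, b, b', hd, rfl⟩ := hy
    have hcd : 0 < c + d := add_pos hc hd
    have hl : c / (c + d) < 1 := by rw [div_lt_one hcd]; linarith
    obtain ⟨e, he⟩ := hconv a b (c / (c + d)) (div_pos hc hcd) hl
    obtain ⟨e', he'⟩ := hconv a' b' (c / (c + d)) (div_pos hc hcd) hl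
    refine ⟨c + d, e, e', hcd, ?_⟩
    ext θ
    simp only [Pi.add_apply, he, he']
    field_simp
    ring
  | smul r x _ hx =>
    obtain ⟨c, a, a', hc, rfl⟩ := hx
    rcases lt_trichotomy r 0 with hr | rfl | hr
    · exact ⟨-r * c, a', a, mul_pos (neg_pos.2 hr) hc, by ext; simp; ring⟩
    · exact ⟨1, a₀, a₀, one_pos, by ext; simp⟩
    · exact ⟨r * c, a, a', mul_pos hr hc, by ext; simp; ring⟩

/-- In a convex environment with a strictly increasing real-valued
function on `Θ` and a minimal `A`, `u` has SSCD iff it has the two-statistic form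
with strictly ratio-ordered coefficient functions. -/
theorem sscd_in_convex_env_iff {Θ A : Type*} [PartialOrder Θ]
    (hub : ∀ θ₁ θ₂ : Θ, ∃ θ : Θ, θ₁ ≤ θ ∧ θ₂ ≤ θ)
    (hlb : ∀ θ₁ θ₂ : Θ, ∃ θ : Θ, θ ≤ θ₁ ∧ θ ≤ θ₂)
    (hrep : ∃ h₀ : Θ → ℝ, StrictMono h₀)
    (u : A → Θ → ℝ) (hconv : ConvexEnv u) (hmin : MinimalActions u) :
    SSCD u ↔
      ∃ (g₁ g₂ : A → ℝ) (f₁ f₂ h : Θ → ℝ),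
        StrictRatioOrdered f₁ f₂ ∧
        (∀ (a : A) (θ : Θ), u a θ = g₁ a * f₁ θ + g₂ a * f₂ θ + h θ) := by
  constructor
  · intro hS
    obtain ⟨h₀, hh₀⟩ := hrep
    have h01 : StrictRatioOrdered h₀ (fun _ => 1) :=
      Or.inl fun l h hlh => by simpa using hh₀ hlh
    rcases isEmpty_or_nonempty A with hA | ⟨⟨a₀⟩⟩
    · exact ⟨0, 0, h₀, fun _ => 1, 0, h01, fun a => isEmptyElim a⟩
    by_cases hlt : ∃ l h : Θ, l < h
    swap
    · have hsub : ∀ x y : Θ, x = y := by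
        intro x y
        obtain ⟨z, hx, hy⟩ := hub x y
        have e₁ : x = z := hx.eq_or_lt.resolve_right fun k => hlt ⟨_, _, k⟩
        have e₂ : y = z := hy.eq_or_lt.resolve_right fun k => hlt ⟨_, _, k⟩
        rw [e₁, e₂]
      rcases isEmpty_or_nonempty Θ with hT | ⟨⟨θ₀⟩⟩
      · exact ⟨0, 0, 0, 0, 0, Or.inl fun l => isEmptyElim l, fun a θ => isEmptyElim θ⟩
      · exact ⟨fun a => u a θ₀, 0, fun _ => 1, 0, 0, Or.inl fun l h k => (hlt ⟨_, _, k⟩).elim,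
          fun a θ => by simp [hsub θ θ₀]⟩
    obtain ⟨l, h, hlh⟩ := hlt
    set V := Submodule.span ℝ {g : Θ → ℝ | ∃ a a' : A, g = u a - u a'} with hV
    have hdiff : ∀ a, u a - u a₀ ∈ V := fun a => Submodule.subset_span ⟨a, a₀, rfl⟩
    have hSC : ∀ f ∈ V, f ≠ 0 → StrictSingleCrossing f := by
      intro f hf hne
      obtain ⟨c, a, a', hc, rfl⟩ := mem_span_diff hconv a₀ hf
      refine (hS a a' ?_).const_mul hc
      rintro rfl
      exact hne (by ext; simp)
    by_cases hV0 : ∀ f ∈ V, f = 0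
    · refine ⟨0, 0, h₀, fun _ => 1, u a₀, h01, fun a θ => ?_⟩
      have := congrFun (hV0 _ (hdiff a)) θ
      simp only [Pi.sub_apply, Pi.zero_apply] at this ⊢
      linarith
    push Not at hV0
    obtain ⟨f₁, hf₁, hne₁⟩ := hV0
    by_cases hV1 : ∀ f ∈ V, ∃ α : ℝ, f = α • f₁
    · choose α hα using fun a => hV1 _ (hdiff a)
      have hu : ∀ a θ, u a θ = α a * f₁ θ + u a₀ θ := by
        intro a θ
        have := congrFun (hα a) θ
        simp only [Pi.sub_apply, Pi.smul_apply, smul_eq_mul] at this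
        linarith
      have hs := hSC f₁ hf₁ hne₁
      rcases hs.1 with hm | hm
      · obtain ⟨f₂, h₂⟩ := exists_dominates hh₀ hm hs.2
        exact ⟨α, 0, f₁, f₂, u a₀, Or.inr h₂, fun a θ => by simp [hu a θ]⟩
      · obtain ⟨f₂, h₂⟩ := exists_dominates (f := fun θ => -f₁ θ) hh₀
          (fun x y hxy => sign_neg_le (hm hxy)) hs.neg.2
        exact ⟨-α, 0, fun θ => -f₁ θ, f₂, u a₀, Or.inr h₂, fun a θ => by simp [hu a θ]⟩
    push Not at hV1
    obtain ⟨f₂, hf₂, hne₂⟩ := hV1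
    have hcomb : ∀ α β : ℝ, (fun θ => α * f₁ θ + β * f₂ θ) ∈ V := fun α β =>
      V.add_mem (V.smul_mem α hf₁) (V.smul_mem β hf₂)
    obtain ⟨hc, hro⟩ := ratioOrdered_of_indep hub hlb (f₁ := f₁) (f₂ := f₂) (by
      intro α β hαβ
      refine hSC _ (hcomb α β) fun e => ?_
      have e' : ∀ θ, α * f₁ θ + β * f₂ θ = 0 := fun θ => congrFun e θ
      by_cases hβ : β = 0
      · subst hβ
        have hα : α ≠ 0 := fun k => hαβ ⟨k, rfl⟩
        exact hne₁ (funext fun θ => by simpa [hα] using e' θ)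
      · refine hne₂ (-α / β) (funext fun θ => ?_)
        simp only [Pi.smul_apply, smul_eq_mul]
        field_simp
        linear_combination e' θ)
    -- Cramer's rule at the two points `l < h`; an element of `V` vanishing at both is zero.
    have hrepr : ∀ f ∈ V, ∃ α β : ℝ, f = fun θ => α * f₁ θ + β * f₂ θ := by
      intro f hf
      have hD := hc l h hlh
      set D := f₁ l * f₂ h - f₁ h * f₂ l with hDdef
      set α := (f l * f₂ h - f h * f₂ l) / D with hα
      set β := (f₁ l * f h - f₁ h * f l) / D with hβ
      have hα' : α * D = f l * f₂ h - f h * f₂ l := div_mul_cancel₀ _ hD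
      have hβ' : β * D = f₁ l * f h - f₁ h * f l := div_mul_cancel₀ _ hD
      refine ⟨α, β, ?_⟩
      by_contra hne
      have hs := hSC _ (V.sub_mem hf (hcomb α β)) (sub_ne_zero.2 hne)
      refine hs.2 l h hlh ⟨?_, ?_⟩
      · refine (mul_eq_zero.1 (?_ : _ * D = 0)).resolve_right hD
        simp only [Pi.sub_apply]
        linear_combination (-f₁ l) * hα' - f₂ l * hβ' + f l * hDdef
      · refine (mul_eq_zero.1 (?_ : _ * D = 0)).resolve_right hD
        simp only [Pi.sub_apply]
        linear_combination (-f₁ h) * hα' - f₂ h * hβ' + f h * hDdef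
    choose α β hαβ using fun a => hrepr _ (hdiff a)
    refine ⟨α, β, f₁, f₂, u a₀, hro, fun a θ => ?_⟩
    have := congrFun (hαβ a) θ
    simp only [Pi.sub_apply] at this
    linarith
  · rintro ⟨g₁, g₂, f₁, f₂, h, hro, hu⟩ a a' hne
    obtain ⟨θ₀, hθ₀⟩ := hmin a a' hne
    have hg : ¬ (g₁ a - g₁ a' = 0 ∧ g₂ a - g₂ a' = 0) := by
      rintro ⟨e₁, e₂⟩
      refine hθ₀ ?_
      rw [hu, hu, sub_eq_zero.1 e₁, sub_eq_zero.1 e₂]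
    rcases hro with hd | hd
    · convert strictSC_of_dominates hub hlb hd hg using 2 with θ
      rw [hu, hu]; ring
    · convert strictSC_of_dominates hub hlb hd (fun k => hg k.symm) using 2 with θ
      rw [hu, hu]; ring
end

section
/- Let Θ ⊆ ℝ with the usual order have at least three elements, let z > 0, and define v : ℝ × Θ → ℝ by v(x, θ) = −|x − θ|^z. Then v has single-crossing expectational differences (SCED), i.e., for every pair of finite-support lotteries P, Q on ℝ the function θ ↦ Σ_x P(x)·v(x,θ) − Σ_x Q(x)·v(x,θ) is single crossing, if and only if z = 2. -/
theorem real_sign_monotone : Monotone Real.sign := by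
  intro x y h
  rcases lt_trichotomy x 0 with hx | hx | hx <;> rcases lt_trichotomy y 0 with hy | hy | hy <;>
    simp [Real.sign_of_neg, Real.sign_of_pos, hx, hy] <;> linarith

theorem singleCrossing_affine (Θ : Set ℝ) (α β : ℝ) :
    SingleCrossing (fun θ : Θ => α + β * (θ : ℝ)) := by
  rcases le_total 0 β with h | h
  · left
    intro s t hst
    have hst' : (s : ℝ) ≤ t := hst
    exact real_sign_monotone (by nlinarith)
  · right
    intro s t hst
    have hst' : (s : ℝ) ≤ t := hst
    exact real_sign_monotone (by nlinarith)

theorem support_mul_finite {P : ℝ → ℝ} (hP : (Function.support P).Finite) (g : ℝ → ℝ) :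
    (Function.support fun x => P x * g x).Finite :=
  hP.subset (Function.support_mul_subset_left P g)

/-- Linearity of the expectation in the weights. -/
theorem finsum_combo {P Q : ℝ → ℝ} (hP : (Function.support P).Finite)
    (hQ : (Function.support Q).Finite) (s t : ℝ) (g : ℝ → ℝ) :
    ∑ᶠ x, (s * P x + t * Q x) * g x = s * ∑ᶠ x, P x * g x + t * ∑ᶠ x, Q x * g x := by
  rw [mul_finsum' _ _ (support_mul_finite hP g), mul_finsum' _ _ (support_mul_finite hQ g),
    ← finsum_add_distrib]
  · exact finsum_congr fun x => by ring
  · exact (support_mul_finite hP g).subset (Function.support_const_smul_subset s _)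
  · exact (support_mul_finite hQ g).subset (Function.support_const_smul_subset t _)

theorem IsLottery.mix {P Q : ℝ → ℝ} (hP : IsLottery P) (hQ : IsLottery Q) {s t : ℝ}
    (hs : 0 ≤ s) (ht : 0 ≤ t) (hst : s + t = 1) : IsLottery fun x => s * P x + t * Q x := by
  refine ⟨fun x => add_nonneg (mul_nonneg hs (hP.1 x)) (mul_nonneg ht (hQ.1 x)), ?_, ?_⟩
  · refine (hP.2.1.union hQ.2.1).subset fun x hx => ?_
    by_contra hcon
    simp only [Set.mem_union, Function.mem_support, not_or, not_not] at hcon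
    exact hx (by simp [hcon.1, hcon.2])
  · have := finsum_combo hP.2.1 hQ.2.1 s t (fun _ => 1)
    simp only [mul_one] at this
    rw [this, hP.2.2, hQ.2.2]
    linarith

theorem isLottery_single (x : ℝ) : IsLottery (Pi.single x (1 : ℝ)) := by
  refine ⟨fun y => ?_, (Set.finite_singleton x).subset (Pi.support_single_subset), ?_⟩
  · by_cases h : y = x
    · subst h; simp
    · simp [h]
  · rw [finsum_eq_single _ x fun y hy => by simp [hy]]
    simp

theorem finsum_single (x : ℝ) (g : ℝ → ℝ) :
    ∑ᶠ y, (Pi.single x (1 : ℝ) : ℝ → ℝ) y * g y = g x := by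
  rw [finsum_eq_single _ x fun y hy => by simp [hy]]
  simp

/-- Every vector in the span of the differences `w x - w y` is a positive multiple of a difference
of expectations of `w` under two lotteries. -/
theorem exists_lottery_of_mem_span {ι : Type*} (w : ℝ → ι → ℝ) (d : ι → ℝ)
    (hd : d ∈ Submodule.span ℝ {d | ∃ x y, d = w x - w y}) :
    ∃ t : ℝ, 0 < t ∧ ∃ P Q : ℝ → ℝ, IsLottery P ∧ IsLottery Q ∧
      ∀ i, d i = t * ((∑ᶠ x, P x * w x i) - ∑ᶠ x, Q x * w x i) := by
  induction hd using Submodule.span_induction with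
  | mem d h =>
    obtain ⟨x, y, rfl⟩ := h
    refine ⟨1, one_pos, _, _, isLottery_single x, isLottery_single y, fun i => ?_⟩
    rw [finsum_single x (fun x => w x i), finsum_single y (fun x => w x i)]
    simp
  | zero => exact ⟨1, one_pos, _, _, isLottery_single 0, isLottery_single 0, fun i => by simp⟩
  | add d e _ _ hd he =>
    obtain ⟨s, hs, P, Q, hP, hQ, h⟩ := hd
    obtain ⟨t, ht, P', Q', hP', hQ', h'⟩ := he
    have hst : 0 < s + t := by positivity
    have h1 : s / (s + t) + t / (s + t) = 1 := by field_simp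
    refine ⟨s + t, hst, _, _, hP.mix hP' (by positivity) (by positivity) h1,
      hQ.mix hQ' (by positivity) (by positivity) h1, fun i => ?_⟩
    rw [finsum_combo hP.2.1 hP'.2.1 _ _ (fun x => w x i),
      finsum_combo hQ.2.1 hQ'.2.1 _ _ (fun x => w x i), Pi.add_apply, h, h']
    field_simp
    ring
  | smul r d _ hd =>
    obtain ⟨s, hs, P, Q, hP, hQ, h⟩ := hd
    rcases lt_trichotomy r 0 with hr | hr | hr
    · refine ⟨-r * s, by nlinarith, Q, P, hQ, hP, fun i => ?_⟩
      rw [Pi.smul_apply, h, smul_eq_mul]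
      ring
    · exact ⟨1, one_pos, P, P, hP, hP, fun i => by simp [hr]⟩
    · refine ⟨r * s, by positivity, P, Q, hP, hQ, fun i => ?_⟩
      rw [Pi.smul_apply, h, smul_eq_mul]
      ring

/-- Differentiating a constant combination of powers to the right of all three base points. -/
theorem deriv_combo {a b c A B C p K : ℝ} (hab : a < b) (hbc : b < c)
    (h : ∀ x, c < x → A * (x - a) ^ p + B * (x - b) ^ p + C * (x - c) ^ p = K)
    (hp : p ≠ 0) (x : ℝ) (hx : c < x) :
    A * (x - a) ^ (p - 1) + B * (x - b) ^ (p - 1) + C * (x - c) ^ (p - 1) = 0 := by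
  have key : ∀ e, e < x → HasDerivAt (fun y : ℝ => (y - e) ^ p) (p * (x - e) ^ (p - 1)) x := by
    intro e he
    have := ((hasDerivAt_id x).sub_const e).rpow_const (p := p) (Or.inl (by simp; linarith))
    simpa using this
  have h1 := (((key a (by linarith)).const_mul A).add ((key b (by linarith)).const_mul B)).add
    ((key c hx).const_mul C)
  have h2 : HasDerivAt (fun _ : ℝ => K) 0 x := hasDerivAt_const x K
  have h3 := h2.congr_of_eventuallyEq (f₁ := fun y => A * (y - a) ^ p + B * (y - b) ^ p
    + C * (y - c) ^ p) (by filter_upwards [lt_mem_nhds hx] with y hy using h y hy)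
  have h4 := h1.unique h3
  have h5 : p * (A * (x - a) ^ (p - 1) + B * (x - b) ^ (p - 1) + C * (x - c) ^ (p - 1)) = 0 := by
    linarith
  exact (mul_eq_zero.mp h5).resolve_left hp

/-- For `z ≠ 2` the functions `|x - a| ^ z`, `|x - b| ^ z`, `|x - c| ^ z` and `1` are linearly
independent. -/
theorem coeff_eq_zero {a b c A B C z K : ℝ} (hab : a < b) (hbc : b < c) (hz : 0 < z) (hz2 : z ≠ 2)
    (h : ∀ x, A * |x - a| ^ z + B * |x - b| ^ z + C * |x - c| ^ z = K) :
    A = 0 ∧ B = 0 ∧ C = 0 := by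
  by_cases hz1 : z = 1
  · subst hz1
    simp only [Real.rpow_one] at h
    -- A step `ε` small enough that `[e - ε, e + ε]` contains no kink other than `e`.
    obtain ⟨ε, hε, hε1, hε2⟩ : ∃ ε : ℝ, 0 < ε ∧ ε ≤ b - a ∧ ε ≤ c - b :=
      ⟨min (b - a) (c - b), lt_min (by linarith) (by linarith), min_le_left _ _, min_le_right _ _⟩
    have hpos : ∀ u : ℝ, 0 ≤ u → |u| = u := fun u => abs_of_nonneg
    have hneg : ∀ u : ℝ, u ≤ 0 → |u| = -u := fun u => abs_of_nonpos
    refine ⟨?_, ?_, ?_⟩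
    · have h1 := h (a - ε)
      have h2 := h a
      have h3 := h (a + ε)
      rw [hneg _ (by linarith), hneg _ (by linarith), hneg _ (by linarith)] at h1
      rw [hneg _ (by linarith), hneg _ (by linarith), hneg _ (by linarith)] at h2
      rw [hpos _ (by linarith), hneg _ (by linarith), hneg _ (by linarith)] at h3
      have : A * ε = 0 := by linarith
      exact (mul_eq_zero.mp this).resolve_right hε.ne'
    · have h1 := h (b - ε)
      have h2 := h b
      have h3 := h (b + ε)
      rw [hpos _ (by linarith), hneg _ (by linarith), hneg _ (by linarith)] at h1
      rw [hpos _ (by linarith), hneg _ (by linarith), hneg _ (by linarith)] at h2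
      rw [hpos _ (by linarith), hpos _ (by linarith), hneg _ (by linarith)] at h3
      have : B * ε = 0 := by linarith
      exact (mul_eq_zero.mp this).resolve_right hε.ne'
    · have h1 := h (c - ε)
      have h2 := h c
      have h3 := h (c + ε)
      rw [hpos _ (by linarith), hpos _ (by linarith), hneg _ (by linarith)] at h1
      rw [hpos _ (by linarith), hpos _ (by linarith), hneg _ (by linarith)] at h2
      rw [hpos _ (by linarith), hpos _ (by linarith), hpos _ (by linarith)] at h3
      have : C * ε = 0 := by linarith
      exact (mul_eq_zero.mp this).resolve_right hε.ne'
  · have h0 : ∀ x, c < x → A * (x - a) ^ z + B * (x - b) ^ z + C * (x - c) ^ z = K := by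
      intro x hx
      have := h x
      rwa [abs_of_pos (by linarith), abs_of_pos (by linarith), abs_of_pos (by linarith)] at this
    have h1 := deriv_combo hab hbc h0 hz.ne'
    have h2 := deriv_combo hab hbc h1 (sub_ne_zero.mpr hz1)
    have h3 := deriv_combo hab hbc h2 (fun hh => hz2 (by linarith))
    have e1 := h1 (c + 1) (by linarith)
    have e2 := h2 (c + 1) (by linarith)
    have e3 := h3 (c + 1) (by linarith)
    have hu : 0 < c + 1 - a := by linarith
    have hv : 0 < c + 1 - b := by linarith
    have hw : 0 < c + 1 - c := by linarith
    have step : ∀ u : ℝ, 0 < u → u ^ (z - 1 - 1) = u ^ (z - 1 - 1 - 1) * u := by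
      intro u hu
      rw [Real.rpow_sub_one hu.ne' (z - 1 - 1)]
      field_simp
    have step' : ∀ u : ℝ, 0 < u → u ^ (z - 1) = u ^ (z - 1 - 1 - 1) * u * u := by
      intro u hu
      rw [← step u hu, Real.rpow_sub_one hu.ne' (z - 1)]
      field_simp
    rw [step' _ hu, step' _ hv, step' _ hw] at e1
    rw [step _ hu, step _ hv, step _ hw] at e2
    have pu := (Real.rpow_pos_of_pos hu (z - 1 - 1 - 1)).ne'
    have pv := (Real.rpow_pos_of_pos hv (z - 1 - 1 - 1)).ne'
    have pw := (Real.rpow_pos_of_pos hw (z - 1 - 1 - 1)).ne'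
    generalize (c + 1 - a) ^ (z - 1 - 1 - 1) = p at *
    generalize (c + 1 - b) ^ (z - 1 - 1 - 1) = q at *
    generalize (c + 1 - c) ^ (z - 1 - 1 - 1) = r at *
    have nab : b - a ≠ 0 := (sub_pos.mpr hab).ne'
    have nbc : c - b ≠ 0 := (sub_pos.mpr hbc).ne'
    have nac : c - a ≠ 0 := ne_of_gt (sub_pos.mpr (hab.trans hbc))
    -- Each coefficient is isolated by the quadratic vanishing at the other two nodes.
    have f1 : A * (p * ((b - a) * (c - a))) = 0 := by
      linear_combination e1 - (c + 1 - b + (c + 1 - c)) * e2 + (c + 1 - b) * (c + 1 - c) * e3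
    have f2 : B * (q * ((b - a) * (c - b))) = 0 := by
      linear_combination -e1 + (c + 1 - a + (c + 1 - c)) * e2 - (c + 1 - a) * (c + 1 - c) * e3
    have f3 : C * (r * ((c - a) * (c - b))) = 0 := by
      linear_combination e1 - (c + 1 - a + (c + 1 - b)) * e2 + (c + 1 - a) * (c + 1 - b) * e3
    simp_all

/-- The vectors `v(x, ·) - v(y, ·)` at three points span `ℝ³` when `z ≠ 2`. -/
theorem span_eq_top {a b c z : ℝ} (hab : a < b) (hbc : b < c) (hz : 0 < z) (hz2 : z ≠ 2) :
    Submodule.span ℝ {d : Fin 3 → ℝ | ∃ x y : ℝ,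
      d = (fun i => -(|x - ![a, b, c] i| ^ z)) - (fun i => -(|y - ![a, b, c] i| ^ z))} = ⊤ := by
  by_contra hne
  obtain ⟨f, hf, hle⟩ := Submodule.exists_le_ker_of_lt_top _ (lt_top_iff_ne_top.mpr hne)
  apply hf
  have hrep : ∀ d : Fin 3 → ℝ, f d = d 0 * f (Pi.single 0 1) + d 1 * f (Pi.single 1 1)
      + d 2 * f (Pi.single 2 1) := by
    intro d
    rw [LinearMap.pi_apply_eq_sum_univ f d, Fin.sum_univ_three]
    have hs : ∀ i : Fin 3, (fun j => if i = j then (1 : ℝ) else 0) = Pi.single i 1 := by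
      intro i
      ext j
      simp [Pi.single_apply, eq_comm]
    simp only [hs, smul_eq_mul]
  have hconst := fun x : ℝ => LinearMap.mem_ker.mp (hle (Submodule.subset_span ⟨x, 0, rfl⟩))
  obtain ⟨hA, hB, hC⟩ := coeff_eq_zero (A := f (Pi.single 0 1)) (B := f (Pi.single 1 1))
    (C := f (Pi.single 2 1)) (K := |0 - a| ^ z * f (Pi.single 0 1)
      + |0 - b| ^ z * f (Pi.single 1 1) + |0 - c| ^ z * f (Pi.single 2 1)) hab hbc hz hz2
    (fun x => by
      have := hconst x
      rw [hrep] at this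
      simp only [Pi.sub_apply, Matrix.cons_val] at this
      linarith)
  refine LinearMap.ext fun d => ?_
  rw [hrep, hA, hB, hC]
  simp

theorem exists_ordered_triple (Θ : Set ℝ)
    (hthree : ∃ θ₁ θ₂ θ₃ : ℝ, θ₁ ∈ Θ ∧ θ₂ ∈ Θ ∧ θ₃ ∈ Θ ∧ θ₁ ≠ θ₂ ∧ θ₁ ≠ θ₃ ∧ θ₂ ≠ θ₃) :
    ∃ a b c : ℝ, a ∈ Θ ∧ b ∈ Θ ∧ c ∈ Θ ∧ a < b ∧ b < c := by
  obtain ⟨p, q, r, hp, hq, hr, h1, h2, h3⟩ := hthree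
  rcases lt_or_gt_of_ne h1 with h1 | h1 <;> rcases lt_or_gt_of_ne h2 with h2 | h2 <;>
    rcases lt_or_gt_of_ne h3 with h3 | h3
  · exact ⟨p, q, r, hp, hq, hr, h1, h3⟩
  · exact ⟨p, r, q, hp, hr, hq, h2, h3⟩
  · linarith
  · exact ⟨r, p, q, hr, hp, hq, h2, h1⟩
  · exact ⟨q, p, r, hq, hp, hr, h1, h2⟩
  · linarith
  · exact ⟨q, r, p, hq, hr, hp, h3, h2⟩
  · exact ⟨r, q, p, hr, hq, hp, h3, h1⟩

/-- The expected quadratic loss in terms of the first two moments. -/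
theorem finsum_quadratic {P : ℝ → ℝ} (hP : IsLottery P) (θ : ℝ) :
    ∑ᶠ x, P x * -(|x - θ| ^ (2 : ℝ)) =
      -(∑ᶠ x, P x * x ^ 2) + 2 * θ * (∑ᶠ x, P x * x) - θ ^ 2 := by
  have hs := hP.2.1.coe_toFinset
  have hfin : ∀ g : ℝ → ℝ, ∑ᶠ x, P x * g x = ∑ x ∈ hP.2.1.toFinset, P x * g x := fun g =>
    finsum_eq_sum_of_support_subset _ (by
      rw [hs]
      exact Function.support_mul_subset_left P g)
  have h1 := hfin (fun _ => 1)
  simp only [mul_one] at h1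
  replace h1 := hP.2.2.symm.trans h1
  rw [hfin (fun x => -(|x - θ| ^ (2 : ℝ))), hfin (fun x => x ^ 2), hfin (fun x => x)]
  have hθ : θ ^ 2 = ∑ x ∈ hP.2.1.toFinset, θ ^ 2 * P x := by
    rw [← Finset.mul_sum, ← h1, mul_one]
  rw [hθ, Finset.mul_sum, ← Finset.sum_neg_distrib, ← Finset.sum_add_distrib,
    ← Finset.sum_sub_distrib]
  refine Finset.sum_congr rfl fun x _ => ?_
  rw [Real.rpow_two, sq_abs]
  ring

/-- With `Θ ⊆ ℝ` having at least three elements, the power loss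
function `v(x,θ) = -|x - θ|^z` has SCED iff `z = 2`. -/
theorem powerLoss_sced_iff_quadratic (Θ : Set ℝ)
    (hthree : ∃ θ₁ θ₂ θ₃ : ℝ, θ₁ ∈ Θ ∧ θ₂ ∈ Θ ∧ θ₃ ∈ Θ ∧ θ₁ ≠ θ₂ ∧ θ₁ ≠ θ₃ ∧ θ₂ ≠ θ₃)
    (z : ℝ) (hz : 0 < z) :
    SCED (fun (x : ℝ) (θ : Θ) => -(|x - (θ : ℝ)| ^ z)) ↔ z = 2 := by
  constructor
  · intro hS
    by_contra hz2
    obtain ⟨a, b, c, ha, hb, hc, hab, hbc⟩ := exists_ordered_triple Θ hthree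
    have hmem : (![1, -1, 1] : Fin 3 → ℝ) ∈ Submodule.span ℝ {d : Fin 3 → ℝ | ∃ x y : ℝ,
        d = (fun i => -(|x - ![a, b, c] i| ^ z)) - (fun i => -(|y - ![a, b, c] i| ^ z))} := by
      rw [span_eq_top hab hbc hz hz2]
      trivial
    obtain ⟨t, ht, P, Q, hP, hQ, h⟩ := exists_lottery_of_mem_span
      (fun (x : ℝ) (i : Fin 3) => -(|x - ![a, b, c] i| ^ z)) _ hmem
    have h0 := h 0
    have h1 := h 1
    have h2 := h 2
    simp only [Matrix.cons_val] at h0 h1 h2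
    have hsc := hS P Q hP hQ
    have s0 : Real.sign ((∑ᶠ x, P x * -(|x - a| ^ z)) - ∑ᶠ x, Q x * -(|x - a| ^ z)) = 1 :=
      Real.sign_of_pos (by by_contra! hn; nlinarith)
    have s1 : Real.sign ((∑ᶠ x, P x * -(|x - b| ^ z)) - ∑ᶠ x, Q x * -(|x - b| ^ z)) = -1 :=
      Real.sign_of_neg (by by_contra! hn; nlinarith)
    have s2 : Real.sign ((∑ᶠ x, P x * -(|x - c| ^ z)) - ∑ᶠ x, Q x * -(|x - c| ^ z)) = 1 :=
      Real.sign_of_pos (by by_contra! hn; nlinarith)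
    rcases hsc with hm | hm
    · have := @hm ⟨a, ha⟩ ⟨b, hb⟩ hab.le
      simp only [s0, s1] at this
      linarith
    · have := @hm ⟨b, hb⟩ ⟨c, hc⟩ hbc.le
      simp only [s1, s2] at this
      linarith
  · rintro rfl P Q hP hQ
    have := singleCrossing_affine Θ (-(∑ᶠ x, P x * x ^ 2) + ∑ᶠ x, Q x * x ^ 2)
      (2 * (∑ᶠ x, P x * x) - 2 * ∑ᶠ x, Q x * x)
    convert this using 2 with θ
    rw [finsum_quadratic hP, finsum_quadratic hQ]
    ring
end
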